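/- Let f : X → X be a minimal continuous map on a compact metric space X. Then the following conditions are equivalent: (1) f × f² is topologically transitive; (2) f is multi-transitive; (3) f is weakly mixing; (4) f is Δ-transitive. -/

import Mathlib

open Set Function

/-- A continuous self-map is topologically transitive if every pair of nonempty
open sets is connected by some positive iterate. -/
def TopTransitive {X : Type*} [TopologicalSpace X] (f : X → X) : Prop :=
  ∀ U V : Set X, IsOpen U → IsOpen V → U.Nonempty → V.Nonempty →
    ∃ n : ℕ, 0 < n ∧ (f^[n] '' U ∩ V).Nonempty

/-- The map `f^{(∗m)} = f × f² × ⋯ × f^m` acting on `X^m` (coordinates indexed by `Fin m`,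
where coordinate `i` is moved by `f^[i+1]`). -/
def starMap {X : Type*} (f : X → X) (m : ℕ) : (Fin m → X) → (Fin m → X) :=
  fun x i => f^[(i : ℕ) + 1] (x i)

/-- `f` is weakly mixing if `f × f` is topologically transitive. -/
def WeaklyMixing {X : Type*} [TopologicalSpace X] (f : X → X) : Prop :=
  TopTransitive (fun p : X × X => (f p.1, f p.2))

/-- `f` is multi-transitive if `f × f² × ⋯ × f^m` is topologically transitive
for every `m ≥ 1`. -/
def MultiTransitive {X : Type*} [TopologicalSpace X] (f : X → X) : Prop :=
  ∀ m : ℕ, 1 ≤ m → TopTransitive (starMap f m)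

/-- `f` is Δ-transitive if for each `m ≥ 1` there is a residual set `Y ⊆ X` such that
for every `x ∈ Y` the diagonal tuple `(x, …, x)` has dense orbit under `f × f² × ⋯ × f^m`. -/
def DeltaTransitive {X : Type*} [TopologicalSpace X] (f : X → X) : Prop :=
  ∀ m : ℕ, 1 ≤ m → ∃ Y : Set X, Y ∈ residual X ∧
    ∀ x ∈ Y, Dense (Set.range fun n : ℕ => (starMap f m)^[n] (fun _ : Fin m => x))

/-- A set `S ⊆ ℕ` is syndetic if there is `L > 0` with `[n, n+L] ∩ S ≠ ∅` for every `n`. -/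
def Syndetic (S : Set ℕ) : Prop :=
  ∃ L : ℕ, 0 < L ∧ ∀ n : ℕ, ∃ k ∈ S, n ≤ k ∧ k ≤ n + L

/-- `N(U,V;f) = {n > 0 : f^n(U) ∩ V ≠ ∅}`. -/
def NSet {X : Type*} (f : X → X) (U V : Set X) : Set ℕ :=
  {n | 0 < n ∧ (f^[n] '' U ∩ V).Nonempty}

/-- `f` is syndetically transitive if `N(U,V;f)` is syndetic for all nonempty open `U, V`. -/
def SyndeticallyTransitive {X : Type*} [TopologicalSpace X] (f : X → X) : Prop :=
  ∀ U V : Set X, IsOpen U → IsOpen V → U.Nonempty → V.Nonempty → Syndetic (NSet f U V)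

/-- `f` is strongly transitive if for every nonempty open `U` there is `M > 0` with
`⋃_{j=1}^M f^j(U) = X`. -/
def StronglyTransitive {X : Type*} [TopologicalSpace X] (f : X → X) : Prop :=
  ∀ U : Set X, IsOpen U → U.Nonempty →
    ∃ M : ℕ, 0 < M ∧ (⋃ j ∈ Finset.Icc 1 M, f^[j] '' U) = Set.univ

/-- `f` is minimal if the only nonempty closed `f`-invariant subset is the whole space. -/
def MinimalMap {X : Type*} [TopologicalSpace X] (f : X → X) : Prop :=
  ∀ K : Set X, IsClosed K → K.Nonempty → f '' K ⊆ K → K = Set.univ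

open MeasureTheory Filter Topology in
lemma exists_invariant_prob {X : Type*} [MetricSpace X] [CompactSpace X] [Nonempty X]
    [MeasurableSpace X] [BorelSpace X] (f : X → X) (hf : Continuous f) :
    ∃ μ : Measure X, IsProbabilityMeasure μ ∧ μ.map f = μ := by
  obtain ⟨x0⟩ := (inferInstance : Nonempty X)
  have hprob : ∀ n : ℕ, IsProbabilityMeasure
      (((n : ENNReal) + 1)⁻¹ • ∑ k ∈ Finset.range (n + 1), Measure.dirac (f^[k] x0)) := by
    intro n
    constructor
    simp only [Measure.smul_apply, Measure.coe_finsetSum, Finset.sum_apply, measure_univ,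
      smul_eq_mul, Finset.sum_const, Finset.card_range, nsmul_eq_mul, mul_one]
    push_cast
    exact ENNReal.inv_mul_cancel (by simp) (by simp)
  let μs : ℕ → ProbabilityMeasure X := fun n => ⟨_, hprob n⟩
  have hμs : ∀ n (φ : BoundedContinuousFunction X ℝ), ∫ x, φ x ∂(μs n : Measure X)
      = birkhoffAverage ℝ f φ (n + 1) x0 := by
    intro n φ
    change ∫ x, φ x ∂(((n : ENNReal) + 1)⁻¹ •
      ∑ k ∈ Finset.range (n + 1), Measure.dirac (f^[k] x0)) = _
    rw [integral_smul_measure, integral_finsetSum_measure]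
    · simp only [integral_dirac, birkhoffAverage, birkhoffSum]
      congr 1
      rw [ENNReal.toReal_inv, ENNReal.toReal_add (by simp) (by simp)]
      simp
    · intro i _
      exact φ.integrable _
  let 𝒰 : Ultrafilter ℕ := Ultrafilter.of atTop
  have h𝒰 : (𝒰 : Filter ℕ) ≤ atTop := Ultrafilter.of_le _
  obtain ⟨μ, -, hμ⟩ := (isCompact_univ (X := ProbabilityMeasure X)).ultrafilter_le_nhds
    (𝒰.map μs) (by simp)
  have hμ : Tendsto μs 𝒰 (𝓝 μ) := hμ
  rw [ProbabilityMeasure.tendsto_iff_forall_integral_tendsto] at hμ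
  have hmeas : Measurable f := hf.measurable
  refine ⟨μ, inferInstance, ?_⟩
  have : IsProbabilityMeasure ((μ : Measure X).map f) :=
    Measure.isProbabilityMeasure_map hmeas.aemeasurable
  apply ext_of_forall_integral_eq_of_IsFiniteMeasure
  intro φ
  rw [integral_map hmeas.aemeasurable φ.continuous.aestronglyMeasurable]
  have h1 := hμ φ
  have h2 := hμ (φ.compContinuous ⟨f, hf⟩)
  have h3 := (((tendsto_birkhoffAverage_apply_sub_birkhoffAverage' ℝ
    φ.isBounded_range f x0).comp (tendsto_add_atTop_nat 1)).mono_left h𝒰)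
  have h4 := h2.sub h1
  have h5 : Tendsto (fun n => ∫ x, (φ.compContinuous ⟨f, hf⟩) x ∂(μs n : Measure X) -
      ∫ x, φ x ∂(μs n : Measure X)) 𝒰 (𝓝 0) := by
    refine h3.congr ?_
    intro n
    rw [hμs, hμs]
    simp only [Function.comp, birkhoffAverage, birkhoffSum]
    congr 2
    refine Finset.sum_congr rfl fun k _ => ?_
    simp [← Function.iterate_succ_apply, Function.iterate_succ_apply']
  have h6 := tendsto_nhds_unique h4 h5
  simpa using sub_eq_zero.1 h6

section Basic

set_option linter.unusedSectionVars false

variable {X : Type*} [MetricSpace X] [CompactSpace X] {f : X → X}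

lemma MinimalMap.surj (hmin : MinimalMap f) (hf : Continuous f) : Function.Surjective f := by
  intro x
  have : Set.range f = Set.univ := by
    apply hmin
    · exact (isCompact_range hf).isClosed
    · exact ⟨f x, x, rfl⟩
    · rintro _ ⟨y, -, rfl⟩
      exact ⟨y, rfl⟩
  rw [← Set.mem_range, this]
  trivial

lemma MinimalMap.hit (hmin : MinimalMap f) (hf : Continuous f) {V : Set X} (hV : IsOpen V)
    (hne : V.Nonempty) (x : X) : ∃ n, f^[n] x ∈ V := by
  by_contra hcon
  push Not at hcon
  have := hmin (closure (Set.range fun n => f^[n] x)) isClosed_closure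
    ⟨x, subset_closure ⟨0, rfl⟩⟩ (by
      refine (image_closure_subset_closure_image hf).trans (closure_mono ?_)
      rintro _ ⟨_, ⟨n, rfl⟩, rfl⟩
      exact ⟨n + 1, Function.iterate_succ_apply' f n x⟩)
  obtain ⟨v, hv⟩ := hne
  have hv' : v ∈ closure (Set.range fun n => f^[n] x) := this ▸ trivial
  obtain ⟨y, hy, n, rfl⟩ := mem_closure_iff.1 hv' V hV hv
  exact hcon n hy

lemma MinimalMap.hit_le (hmin : MinimalMap f) (hf : Continuous f) {V : Set X} (hV : IsOpen V)
    (hne : V.Nonempty) : ∃ L : ℕ, ∀ x, ∃ n ≤ L, f^[n] x ∈ V := by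
  obtain ⟨t, ht⟩ := (isCompact_univ (X := X)).elim_finite_subcover (fun n => f^[n] ⁻¹' V)
    (fun n => hV.preimage (hf.iterate n))
    (fun x _ => Set.mem_iUnion.2 (hmin.hit hf hV hne x))
  refine ⟨t.sup id, fun x => ?_⟩
  obtain ⟨n, hn, hx⟩ := Set.mem_iUnion₂.1 (ht (Set.mem_univ x))
  exact ⟨n, Finset.le_sup (f := id) hn, hx⟩

lemma MinimalMap.cover (hmin : MinimalMap f) (hf : Continuous f) {U : Set X} (hU : IsOpen U)
    (hne : U.Nonempty) : ∃ L : ℕ, ∀ y, ∃ n ≤ L, ∃ z ∈ U, f^[n] z = y := by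
  obtain ⟨L, hL⟩ := hmin.hit_le hf hU hne
  refine ⟨L, fun y => ?_⟩
  obtain ⟨w, rfl⟩ := (hmin.surj hf).iterate L y
  obtain ⟨n, hn, hw⟩ := hL w
  refine ⟨L - n, by omega, _, hw, ?_⟩
  rw [← Function.iterate_add_apply]
  congr 2
  omega

lemma starMap_iterate (f : X → X) (m n : ℕ) (x : Fin m → X) (i : Fin m) :
    (starMap f m)^[n] x i = f^[((i : ℕ) + 1) * n] (x i) := by
  induction n generalizing x with
  | zero => rfl
  | succ n ih =>
    rw [Function.iterate_succ_apply, ih, starMap, ← Function.iterate_add_apply]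
    rfl

lemma starMap_continuous (hf : Continuous f) (m : ℕ) : Continuous (starMap f m) := by
  unfold starMap
  exact continuous_pi fun i => (hf.iterate _).comp (continuous_apply i)

lemma starMap_surj (hs : Function.Surjective f) (m : ℕ) : Function.Surjective (starMap f m) := by
  intro y
  choose g hg using fun i : Fin m => hs.iterate ((i : ℕ) + 1) (y i)
  exact ⟨g, funext hg⟩

lemma prod_iterate (f : X → X) (n : ℕ) (p : X × X) :
    (fun p : X × X => (f p.1, f p.2))^[n] p = (f^[n] p.1, f^[n] p.2) := by
  induction n generalizing p with
  | zero => rfl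
  | succ n ih => rw [Function.iterate_succ_apply, ih]; rfl

lemma delta_imp_one (hf : Continuous f) (hmin : MinimalMap f) (h : DeltaTransitive f) :
    TopTransitive (starMap f 2) := by
  intro U V hU hV hUn hVn
  obtain ⟨Y, hY, hd⟩ := h 2 (by norm_num)
  have : Nonempty X := ⟨hUn.some 0⟩
  obtain ⟨x, hx⟩ := (dense_of_mem_residual hY).nonempty
  obtain ⟨_, ⟨k, rfl⟩, hk⟩ := (hd x hx).exists_mem_open hU hUn
  have hVn' : ((starMap f 2)^[k + 1] ⁻¹' V).Nonempty :=
    hVn.preimage ((starMap_surj (hmin.surj hf) 2).iterate (k + 1))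
  obtain ⟨_, ⟨l, rfl⟩, hl⟩ := (hd x hx).exists_mem_open
    (hV.preimage ((starMap_continuous hf 2).iterate (k + 1))) hVn'
  refine ⟨l + 1, by omega, _, ⟨_, hk, rfl⟩, ?_⟩
  simp only [Set.mem_preimage, ← Function.iterate_add_apply] at hl ⊢
  rwa [show l + 1 + k = k + 1 + l by omega]

/-- coordinatewise form of multi-transitivity -/
lemma MultiTransitive.exists (h : MultiTransitive f) {m : ℕ} (U V : Fin m → Set X)
    (hm : 1 ≤ m)
    (hU : ∀ i, IsOpen (U i)) (hV : ∀ i, IsOpen (V i)) (hUn : ∀ i, (U i).Nonempty)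
    (hVn : ∀ i, (V i).Nonempty) :
    ∃ n : ℕ, ∀ i : Fin m, ∃ x ∈ U i, f^[((i : ℕ) + 1) * n] x ∈ V i := by
  obtain ⟨n, -, _, ⟨x, hx, rfl⟩, hy⟩ := h m hm (Set.univ.pi U) (Set.univ.pi V)
    (isOpen_set_pi Set.finite_univ fun i _ => hU i)
    (isOpen_set_pi Set.finite_univ fun i _ => hV i)
    (Set.univ_pi_nonempty_iff.2 hUn) (Set.univ_pi_nonempty_iff.2 hVn)
  refine ⟨n, fun i => ⟨x i, hx i trivial, ?_⟩⟩
  rw [← starMap_iterate]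
  exact hy i trivial

/-- The key shrinking lemma. -/
lemma shrink (hf : Continuous f) (hmin : MinimalMap f) (h : MultiTransitive f) {m : ℕ}
    (hm : 1 ≤ m) (V : Fin m → Set X)
    (hV : ∀ i, IsOpen (V i)) (hVn : ∀ i, (V i).Nonempty) (M : ℕ) :
    ∃ (W : Fin m → Set X) (k : ℕ → ℕ), (∀ i, IsOpen (W i)) ∧ (∀ i, (W i).Nonempty) ∧
      ∀ j < M, ∀ i : Fin m, ∀ x ∈ W i,
        f^[((i : ℕ) + 1) * k j + (i : ℕ) * j] x ∈ V i := by
  induction M with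
  | zero => exact ⟨V, fun _ => 0, hV, hVn, by simp⟩
  | succ M ih =>
    obtain ⟨W, k, hW, hWn, hk⟩ := ih
    obtain ⟨n, hn⟩ := h.exists W (fun i => f^[(i : ℕ) * M] ⁻¹' V i) hm hW
      (fun i => (hV i).preimage (hf.iterate _)) hWn
      (fun i => (hVn i).preimage ((hmin.surj hf).iterate _))
    refine ⟨fun i => W i ∩ f^[((i : ℕ) + 1) * n] ⁻¹' (f^[(i : ℕ) * M] ⁻¹' V i),
      Function.update k M n, fun i => (hW i).inter
        (((hV i).preimage (hf.iterate _)).preimage (hf.iterate _)), fun i => ?_, ?_⟩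
    · obtain ⟨x, hx, hx'⟩ := hn i
      exact ⟨x, hx, hx'⟩
    · intro j hj i x hx
      rcases Nat.lt_succ_iff_lt_or_eq.1 hj with hj | rfl
      · rw [Function.update_of_ne hj.ne]
        exact hk j hj i x hx.1
      · rw [Function.update_self, add_comm, Function.iterate_add_apply]
        exact hx.2

lemma delta_aux (hf : Continuous f) (hmin : MinimalMap f) (h : MultiTransitive f) (m : ℕ) :
    ∀ (U : Set X) (V : Fin m → Set X), IsOpen U → U.Nonempty →
    (∀ i, IsOpen (V i)) → (∀ i, (V i).Nonempty) →
    ∃ n : ℕ, ∃ x ∈ U, ∀ i : Fin m, f^[((i : ℕ) + 1) * n] x ∈ V i := by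
  induction m with
  | zero => exact fun U V _ hUn _ _ => ⟨0, hUn.some, hUn.some_mem, fun i => i.elim0⟩
  | succ m ih =>
    intro U V hU hUn hV hVn
    obtain ⟨L, hL⟩ := hmin.cover hf hU hUn
    obtain ⟨W, k, hW, hWn, hk⟩ := shrink hf hmin h (by omega) V hV hVn (L + 1)
    obtain ⟨n, x, hx, hxn⟩ := ih (W 0) (fun i => W i.succ) (hW 0) (hWn 0)
      (fun i => hW _) (fun i => hWn _)
    obtain ⟨y, rfl⟩ := (hmin.surj hf).iterate n x
    obtain ⟨j, hj, z, hz, rfl⟩ := hL y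
    have key : ∀ i : Fin (m + 1), f^[((i : ℕ) + 1) * n + j] z ∈ W i := by
      intro i
      refine Fin.cases ?_ (fun i => ?_) i
      · rw [Function.iterate_add_apply]
        simpa using hx
      · have := hxn i
        simp only [← Function.iterate_add_apply] at this
        rwa [show ((i.succ : Fin (m + 1)) : ℕ) + 1 = (i : ℕ) + 2 from rfl,
          show ((i : ℕ) + 2) * n + j = ((i : ℕ) + 1) * n + (n + j) by ring]
    refine ⟨n + (k j + j), z, hz, fun i => ?_⟩
    have := hk j (by omega) i _ (key i)
    rw [← Function.iterate_add_apply] at this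
    convert this using 2
    ring

lemma multi_imp_delta (hf : Continuous f) (hmin : MinimalMap f) (h : MultiTransitive f) :
    DeltaTransitive f := by
  intro m _
  let B := TopologicalSpace.countableBasis X
  have hBc : Countable B := (TopologicalSpace.countable_countableBasis X).to_subtype
  have hB : TopologicalSpace.IsTopologicalBasis B := TopologicalSpace.isBasis_countableBasis X
  have hBo : ∀ b : B, IsOpen (b : Set X) := fun b => hB.isOpen b.2
  have hBn : ∀ b : B, (b : Set X).Nonempty :=
    fun b => TopologicalSpace.nonempty_of_mem_countableBasis b.2
  let G : (Fin m → B) → Set X := fun V => ⋃ n : ℕ, ⋂ i : Fin m,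
    f^[((i : ℕ) + 1) * n] ⁻¹' (V i : Set X)
  refine ⟨⋂ V, G V, ?_, ?_⟩
  · refine countable_iInter_mem.2 fun V => ?_
    apply residual_of_dense_open
    · exact isOpen_iUnion fun n => isOpen_iInter_of_finite fun i =>
        (hBo _).preimage (hf.iterate _)
    · rw [dense_iff_inter_open]
      intro U hU hUn
      obtain ⟨n, x, hx, hxn⟩ := delta_aux hf hmin h m U (fun i => V i) hU hUn
        (fun i => hBo _) (fun i => hBn _)
      exact ⟨x, hx, Set.mem_iUnion.2 ⟨n, Set.mem_iInter.2 hxn⟩⟩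
  · intro x hx
    rw [dense_iff_inter_open]
    rintro O hO ⟨y, hy⟩
    obtain ⟨u, hu, huO⟩ := isOpen_pi_iff'.1 hO y hy
    choose b hb hyb hbu using fun i => hB.exists_subset_of_mem_open (hu i).2 (hu i).1
    obtain ⟨n, hn⟩ := Set.mem_iUnion.1 (Set.mem_iInter.1 hx fun i => ⟨b i, hb i⟩)
    refine ⟨_, huO fun i _ => hbu i ?_, n, rfl⟩
    change (starMap f m)^[n] (fun _ => x) i ∈ b i
    rw [starMap_iterate]
    exact Set.mem_iInter.1 hn i

/-- thickly syndetic sets -/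
def ThickSynd (S : Set ℕ) : Prop :=
  ∀ k : ℕ, ∃ L : ℕ, ∀ n : ℕ, ∃ p, n ≤ p ∧ p ≤ n + L ∧ ∀ i ≤ k, p + i ∈ S

lemma ThickSynd.inter {S T : Set ℕ} (hS : ThickSynd S) (hT : ThickSynd T) :
    ThickSynd (S ∩ T) := by
  intro k
  obtain ⟨L, hL⟩ := hT k
  obtain ⟨K, hK⟩ := hS (L + k)
  refine ⟨K + L, fun n => ?_⟩
  obtain ⟨p, hp1, hp2, hp⟩ := hK n
  obtain ⟨q, hq1, hq2, hq⟩ := hL p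
  refine ⟨q, by omega, by omega, fun i hi => ⟨?_, hq i hi⟩⟩
  have := hp (q - p + i) (by omega)
  rwa [show p + (q - p + i) = q + i by omega] at this

lemma ThickSynd.scale {S : Set ℕ} (hS : ThickSynd S) (a : ℕ) :
    ThickSynd {n | (a + 1) * n ∈ S} := by
  intro k
  obtain ⟨L, hL⟩ := hS ((a + 1) * (k + 1))
  refine ⟨L + 1, fun n => ?_⟩
  obtain ⟨p, hp1, hp2, hp⟩ := hL ((a + 1) * n)
  have h1 := Nat.div_add_mod p (a + 1)
  have h2 := Nat.mod_lt p (Nat.succ_pos a)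
  set q := p / (a + 1)
  set r := p % (a + 1)
  have hnq : n ≤ q := (Nat.le_div_iff_mul_le (Nat.succ_pos a)).2 (by linarith)
  have hq : q ≤ n + L := by
    by_contra hcon
    push Not at hcon
    nlinarith
  refine ⟨q + 1, by omega, by omega, fun i hi => ?_⟩
  have h3 : (a + 1) * i ≤ (a + 1) * k := Nat.mul_le_mul_left _ hi
  have := hp ((a + 1) * (i + 1) - r) (by
    have : (a + 1) * (i + 1) ≤ (a + 1) * (k + 1) := Nat.mul_le_mul_left _ (by omega)
    omega)
  have h4 : p + ((a + 1) * (i + 1) - r) = (a + 1) * (q + 1 + i) := by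
    have h5 : (a + 1) * (q + 1 + i) = (a + 1) * q + (a + 1) * (i + 1) := by ring
    have h6 : (a + 1) * (i + 1) = (a + 1) * i + (a + 1) := by ring
    omega
  rw [h4] at this
  exact this

lemma ThickSynd.all {m : ℕ} (S : Fin m → Set ℕ) (h : ∀ i, ThickSynd (S i)) :
    ThickSynd {n | ∀ i, n ∈ S i} := by
  induction m with
  | zero => exact fun k => ⟨0, fun n => ⟨n, by simp⟩⟩
  | succ m ih =>
    have := (h 0).inter (ih (fun i => S i.succ) fun i => h _)
    convert this using 1
    ext n
    simp [Fin.forall_fin_succ]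

lemma wm_pair (hf : Continuous f) (h : WeaklyMixing f) {A B C D : Set X}
    (hA : IsOpen A) (hB : IsOpen B) (hC : IsOpen C) (hD : IsOpen D)
    (hAn : A.Nonempty) (hBn : B.Nonempty) (hCn : C.Nonempty) (hDn : D.Nonempty) :
    ∃ U V : Set X, IsOpen U ∧ IsOpen V ∧ U.Nonempty ∧ V.Nonempty ∧
      ∀ n, (∃ x ∈ U, f^[n] x ∈ V) → (∃ x ∈ A, f^[n] x ∈ B) ∧ (∃ x ∈ C, f^[n] x ∈ D) := by
  obtain ⟨n, -, _, ⟨⟨a, b⟩, hab, rfl⟩, hcd⟩ := h (A ×ˢ B) (C ×ˢ D) (hA.prod hB) (hC.prod hD)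
    (hAn.prod hBn) (hCn.prod hDn)
  rw [prod_iterate] at hcd
  refine ⟨A ∩ f^[n] ⁻¹' C, B ∩ f^[n] ⁻¹' D, hA.inter (hC.preimage (hf.iterate n)),
    hB.inter (hD.preimage (hf.iterate n)), ⟨a, hab.1, hcd.1⟩, ⟨b, hab.2, hcd.2⟩, ?_⟩
  rintro k ⟨x, hx, hxk⟩
  refine ⟨⟨x, hx.1, hxk.1⟩, f^[n] x, hx.2, ?_⟩
  rw [← Function.iterate_add_apply, add_comm, Function.iterate_add_apply]
  exact hxk.2

lemma wm_thick (hf : Continuous f) (hmin : MinimalMap f) (h : WeaklyMixing f) {U V : Set X}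
    (hU : IsOpen U) (hV : IsOpen V) (hUn : U.Nonempty) (hVn : V.Nonempty) :
    ThickSynd {n | ∃ x ∈ U, f^[n] x ∈ V} := by
  intro k
  have key : ∃ A B : Set X, IsOpen A ∧ IsOpen B ∧ A.Nonempty ∧ B.Nonempty ∧
      ∀ n, (∃ x ∈ A, f^[n] x ∈ B) → ∀ i ≤ k, ∃ x ∈ U, f^[n + i] x ∈ V := by
    induction k with
    | zero => exact ⟨U, V, hU, hV, hUn, hVn, fun n hn i hi => by
        obtain rfl : i = 0 := by omega
        exact hn⟩
    | succ k ih =>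
      obtain ⟨A, B, hA, hB, hAn, hBn, hAB⟩ := ih
      obtain ⟨A', B', hA', hB', hAn', hBn', hAB'⟩ := wm_pair hf h hA hB hU
        (hV.preimage (hf.iterate (k + 1))) hAn hBn hUn
        (hVn.preimage ((hmin.surj hf).iterate _))
      refine ⟨A', B', hA', hB', hAn', hBn', fun n hn i hi => ?_⟩
      obtain ⟨h1, x, hx, hx'⟩ := hAB' n hn
      rcases Nat.le_succ_iff.1 hi with hi | rfl
      · exact hAB n h1 i hi
      · refine ⟨x, hx, ?_⟩
        rw [add_comm, Function.iterate_add_apply]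
        exact hx'
  obtain ⟨A, B, hA, hB, ⟨a, ha⟩, hBn, hAB⟩ := key
  obtain ⟨L, hL⟩ := hmin.hit_le hf hB hBn
  refine ⟨L, fun n => ?_⟩
  obtain ⟨j, hj, hjB⟩ := hL (f^[n] a)
  rw [← Function.iterate_add_apply] at hjB
  exact ⟨j + n, by omega, by omega, hAB _ ⟨a, ha, hjB⟩⟩

lemma wm_imp_multi (hf : Continuous f) (hmin : MinimalMap f) (h : WeaklyMixing f) :
    MultiTransitive f := by
  rintro m - U V hU hV ⟨x, hx⟩ ⟨y, hy⟩
  obtain ⟨u, hu, huO⟩ := isOpen_pi_iff'.1 hU x hx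
  obtain ⟨v, hv, hvO⟩ := isOpen_pi_iff'.1 hV y hy
  have := ThickSynd.all (fun i : Fin m => {n | ((i : ℕ) + 1) * n ∈
    {n | ∃ x ∈ u i, f^[n] x ∈ v i}}) (fun i => (wm_thick hf hmin h (hu i).1 (hv i).1
      ⟨_, (hu i).2⟩ ⟨_, (hv i).2⟩).scale i)
  obtain ⟨L, hL⟩ := this 0
  obtain ⟨n, hn, -, hn'⟩ := hL 1
  have hn' := hn' 0 le_rfl
  choose z hz hzv using hn'
  refine ⟨n, hn, _, ⟨z, huO fun i _ => hz i, rfl⟩, hvO fun i _ => ?_⟩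
  rw [starMap_iterate]
  exact hzv i

open MeasureTheory Filter Topology in
lemma one_imp_wm (hf : Continuous f) (hmin : MinimalMap f) (h : TopTransitive (starMap f 2)) :
    WeaklyMixing f := by
  by_contra hcon
  unfold WeaklyMixing TopTransitive at hcon
  push Not at hcon
  obtain ⟨U, V, hU, hV, ⟨u, hu⟩, ⟨v, hv⟩, hUV⟩ := hcon
  have : Nonempty X := ⟨u.1⟩
  borelize X
  obtain ⟨μ, hμp, hμ⟩ := exists_invariant_prob f hf
  have hs := hmin.surj hf
  set F : X × X → X × X := fun p => (f p.1, f p.2) with hF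
  have hFc : Continuous F := by fun_prop
  -- full support
  have hsupp : ∀ O : Set X, IsOpen O → μ O = 0 → O = ∅ := by
    intro O hO hO0
    by_contra hne
    have hne := Set.nonempty_iff_ne_empty.2 hne
    have hpre : ∀ n, μ (f^[n] ⁻¹' O) = 0 := by
      intro n
      have hmp : MeasurePreserving f μ μ := ⟨hf.measurable, hμ⟩
      rw [(hmp.iterate n).measure_preimage hO.measurableSet.nullMeasurableSet, hO0]
    have huniv : (⋃ n, f^[n] ⁻¹' O) = Set.univ :=
      Set.eq_univ_of_forall fun x => Set.mem_iUnion.2 (hmin.hit hf hO hne x)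
    have : μ Set.univ = 0 := by rw [← huniv]; exact measure_iUnion_null hpre
    simp at this
  -- the invariant closed set
  set W : Set (X × X) := closure (⋃ n : ℕ, F^[n] '' U) with hW
  have hWc : IsClosed W := isClosed_closure
  have hUW : U ⊆ W := fun p hp => subset_closure (Set.mem_iUnion.2 ⟨0, p, hp, rfl⟩)
  have hFW : ∀ p ∈ W, F p ∈ W := by
    intro p hp
    refine closure_mono ?_ (image_closure_subset_closure_image hFc ⟨p, hp, rfl⟩)
    rintro _ ⟨q, hq, rfl⟩
    obtain ⟨n, r, hr, rfl⟩ := Set.mem_iUnion.1 hq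
    exact Set.mem_iUnion.2 ⟨n + 1, r, hr, Function.iterate_succ_apply' F n r⟩
  have hFWn : ∀ n, ∀ p ∈ W, F^[n] p ∈ W := by
    intro n
    induction n with
    | zero => exact fun p hp => hp
    | succ n ih => exact fun p hp => ih _ (hFW p hp)
  have hWV : ∀ p ∈ W, F p ∉ V := by
    intro p hp hpV
    obtain ⟨q, hqV, hq⟩ := mem_closure_iff.1 hp (F ⁻¹' V) (hV.preimage hFc) hpV
    obtain ⟨n, r, hr, rfl⟩ := Set.mem_iUnion.1 hq
    have := hUV (n + 1) (by omega)
    refine Set.notMem_empty (F (F^[n] r)) (this ▸ ⟨⟨r, hr, ?_⟩, hqV⟩)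
    exact Function.iterate_succ_apply' F n r
  let S : X → Set X := fun x => {y | (x, y) ∈ W}
  have hSc : ∀ x, IsClosed (S x) := fun x => hWc.preimage (by fun_prop)
  have hSf : ∀ x, S x ⊆ f ⁻¹' S (f x) := fun x y hy => hFW _ hy
  have husc : ∀ x O, IsOpen O → S x ⊆ O → ∀ᶠ x' in 𝓝 x, S x' ⊆ O := by
    intro x O hO hxO
    have hcl : IsClosed (Prod.fst '' (W ∩ Prod.snd ⁻¹' Oᶜ)) :=
      ((hWc.inter (hO.isClosed_compl.preimage continuous_snd)).isCompact.image
        continuous_fst).isClosed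
    have hx : x ∈ (Prod.fst '' (W ∩ Prod.snd ⁻¹' Oᶜ))ᶜ := by
      rintro ⟨⟨x', y⟩, ⟨h1, h2⟩, rfl⟩
      exact h2 (hxO h1)
    filter_upwards [hcl.isOpen_compl.mem_nhds hx] with x' hx' y hy
    by_contra hyO
    exact hx' ⟨(x', y), ⟨hy, hyO⟩, rfl⟩
  have hinv : ∀ T : Set X, IsClosed T → μ.real (f ⁻¹' T) = μ.real T := by
    intro T hT
    have hmp : MeasurePreserving f μ μ := ⟨hf.measurable, hμ⟩
    rw [Measure.real, Measure.real, hmp.measure_preimage hT.measurableSet.nullMeasurableSet]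
  have hout : ∀ x (ε : ℝ), 0 < ε → ∃ O, IsOpen O ∧ S x ⊆ O ∧ μ.real O < μ.real (S x) + ε := by
    intro x ε hε
    obtain ⟨O, hO1, hO2, hO3⟩ := (S x).exists_isOpen_lt_add (μ := μ) (measure_ne_top _ _)
      (ε := ENNReal.ofReal ε) (by simpa using hε)
    refine ⟨O, hO2, hO1, ?_⟩
    have := (ENNReal.toReal_lt_toReal (measure_ne_top _ _)
      (ENNReal.add_ne_top.2 ⟨measure_ne_top _ _, ENNReal.ofReal_ne_top⟩)).2 hO3
    rwa [ENNReal.toReal_add (measure_ne_top _ _) ENNReal.ofReal_ne_top,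
      ENNReal.toReal_ofReal hε.le] at this
  have hle : ∀ x y, μ.real (S x) ≤ μ.real (S y) := by
    intro x y
    have hK := hmin {z | μ.real (S x) ≤ μ.real (S z)} (by
      rw [← isOpen_compl_iff, isOpen_iff_mem_nhds]
      intro z hz
      have hz : μ.real (S z) < μ.real (S x) := not_le.1 hz
      obtain ⟨O, hO, hzO, hlt⟩ := hout z (μ.real (S x) - μ.real (S z)) (by linarith)
      filter_upwards [husc z O hO hzO] with z' hz'
      have : μ.real (S z') ≤ μ.real O := measureReal_mono hz'
      have h' : ¬ (μ.real (S x) ≤ μ.real (S z')) := by linarith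
      exact h') ⟨x, le_refl (μ.real (S x))⟩ (by
      rintro _ ⟨z, hz, rfl⟩
      have hz : μ.real (S x) ≤ μ.real (S z) := hz
      change μ.real (S x) ≤ μ.real (S (f z))
      refine le_trans hz ?_
      rw [← hinv _ (hSc (f z))]
      exact measureReal_mono (hSf z))
    have : y ∈ {z | μ.real (S x) ≤ μ.real (S z)} := hK ▸ trivial
    exact this
  have hconst : ∀ x y, μ.real (S x) = μ.real (S y) := fun x y => le_antisymm (hle x y) (hle y x)
  let e : X → X → ℝ := fun x y => μ.real (S x \ S y)
  have he : ∀ x y, e x y = μ.real (S x) - μ.real (S x ∩ S y) := by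
    intro x y
    have := measureReal_inter_add_sdiff (μ := μ) (s := S x) (hSc y).measurableSet
    simp only [e]
    linarith
  have hsymm : ∀ x y, e x y = e y x := by
    intro x y
    rw [he, he, Set.inter_comm, hconst x y]
  have htri : ∀ x y z, e x z ≤ e x y + e y z := by
    intro x y z
    refine le_trans (measureReal_mono ?_) (measureReal_union_le _ _)
    intro t ht
    by_cases hy : t ∈ S y
    · exact Or.inr ⟨hy, ht.2⟩
    · exact Or.inl ⟨ht.1, hy⟩
  have hne : ∀ x y, e (f x) (f y) ≤ e x y := by
    intro x y
    rw [he, he, hconst (f x) x, ← hinv _ ((hSc (f x)).inter (hSc (f y)))]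
    have : μ.real (S x ∩ S y) ≤ μ.real (f ⁻¹' (S (f x) ∩ S (f y))) :=
      measureReal_mono fun t ht => ⟨hSf x ht.1, hSf y ht.2⟩
    linarith
  have hnen : ∀ n x y, e (f^[n] x) (f^[n] y) ≤ e x y := by
    intro n
    induction n with
    | zero => exact fun x y => le_rfl
    | succ n ih => exact fun x y => (ih _ _).trans (hne x y)
  have hcont : ∀ x (ε : ℝ), 0 < ε → ∃ O, IsOpen O ∧ x ∈ O ∧ ∀ y ∈ O, e y x < ε := by
    intro x ε hε
    obtain ⟨O, hO, hxO, hlt⟩ := hout x ε hε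
    obtain ⟨Q, hQ1, hQ2, hQ3⟩ := eventually_nhds_iff.1 (husc x O hO hxO)
    refine ⟨Q, hQ2, hQ3, fun y hy => ?_⟩
    have h1 : e y x ≤ μ.real (O \ S x) := measureReal_mono (Set.sdiff_subset_sdiff_left (hQ1 y hy))
    have h2 := measureReal_sdiff_add_inter (μ := μ) (s := O) (hSc x).measurableSet
    rw [Set.inter_eq_self_of_subset_right hxO] at h2
    linarith
  have hzero : ∀ x w, e w x ≤ 0 := by
    intro x0 w
    refine le_of_forall_pos_le_add fun δ hδ => ?_
    obtain ⟨A, hA, hxA, hAe⟩ := hcont x0 (δ / 6) (by linarith)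
    obtain ⟨B, hB, hwB, hBe⟩ := hcont w (δ / 6) (by linarith)
    obtain ⟨n, -, _, ⟨z, hz, rfl⟩, hzn⟩ := h (Set.univ.pi fun _ => A)
      (Set.univ.pi ![A, B])
      (isOpen_set_pi Set.finite_univ fun i _ => hA)
      (isOpen_set_pi Set.finite_univ fun i _ => by fin_cases i <;> assumption)
      ⟨fun _ => x0, fun _ _ => hxA⟩
      ⟨![x0, w], fun i _ => by fin_cases i <;> assumption⟩
    have hx := hAe _ (hz 0 trivial)
    have hy := hAe _ (hz 1 trivial)
    have h0 := hzn 0 trivial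
    have h1 := hzn 1 trivial
    rw [starMap_iterate] at h0 h1
    simp only [Fin.val_zero, Fin.val_one, zero_add, one_mul, Matrix.cons_val_zero,
      Matrix.cons_val_one] at h0 h1
    set x := z 0
    set y := z 1
    have h0 := hAe _ h0
    have h1 := hBe _ h1
    have t1 := htri w (f^[(1 + 1) * n] y) x0
    have t2 := htri (f^[(1 + 1) * n] y) (f^[(1 + 1) * n] x) x0
    have t3 := htri (f^[(1 + 1) * n] x) (f^[n] x) x0
    have t4 := hnen ((1 + 1) * n) y x
    have t5 := hnen n (f^[n] x) x
    rw [← Function.iterate_add_apply, ← two_mul] at t5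
    have t6 := htri y x0 x
    have t7 := htri (f^[n] x) x0 x
    have s1 := hsymm w (f^[(1 + 1) * n] y)
    have s2 := hsymm x x0
    norm_num at *
    linarith
  -- conclusion
  obtain ⟨A, B, hA, hB, huA, huB, hAB⟩ := isOpen_prod_iff.1 hU u.1 u.2 hu
  have hBS : ∀ x, B ⊆ S x := by
    intro x
    have h1 : μ.real (B \ S x) ≤ 0 := le_trans (measureReal_mono (Set.sdiff_subset_sdiff_left
      fun b hb => hUW (hAB (Set.mk_mem_prod huA hb)))) (hzero x u.1)
    have h2 : μ (B \ S x) = 0 := by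
      have := le_antisymm h1 measureReal_nonneg
      exact (measureReal_eq_zero_iff).1 this
    exact Set.sdiff_eq_empty.1 (hsupp _ (hB.sdiff (hSc x)) h2)
  obtain ⟨C, D, hC, hD, hvC, hvD, hCD⟩ := isOpen_prod_iff.1 hV v.1 v.2 hv
  obtain ⟨b', hb'⟩ := hs v.2
  obtain ⟨n, hn⟩ := hmin.hit hf (hD.preimage hf) ⟨b', by simpa [hb'] using hvD⟩ u.2
  obtain ⟨x, hx⟩ := hs.iterate (n + 1) v.1
  have hxW : (x, u.2) ∈ W := hBS x huB
  refine hWV _ (hFWn n _ hxW) (hCD ?_)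
  rw [hF, prod_iterate]
  refine ⟨?_, hn⟩
  change f (f^[n] x) ∈ C
  rw [← Function.iterate_succ_apply' f n x, hx]
  exact hvC

end Basic


/-- For a minimal continuous map `f` on a compact metric space the
following are equivalent: (1) `f × f²` is transitive; (2) `f` is multi-transitive;
(3) `f` is weakly mixing; (4) `f` is Δ-transitive. -/
theorem statement5 {X : Type*} [MetricSpace X] [CompactSpace X] (f : X → X)
    (hf : Continuous f) (hmin : MinimalMap f) :
    List.TFAE [TopTransitive (starMap f 2), MultiTransitive f,
      WeaklyMixing f, DeltaTransitive f] := by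
  tfae_have 1 → 3 := one_imp_wm hf hmin
  tfae_have 3 → 2 := wm_imp_multi hf hmin
  tfae_have 2 → 4 := multi_imp_delta hf hmin
  tfae_have 4 → 1 := delta_imp_one hf hmin
  tfae_finish
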